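/- Let U be the number of vertices pruned by Rule 2 in the random unit disk graph G_n. Then there exists a constant C > 0 such that for all sufficiently large n, E(U) ≥ n − C·α_n. -/

import Mathlib

open MeasureTheory Real Set
open scoped ENNReal

noncomputable section

/-- The Euclidean plane ℝ². -/
abbrev Plane := EuclideanSpace ℝ (Fin 2)

/-- The square region `Q = [0, ℓ]²`. -/
def square (ℓ : ℝ) : Set Plane := {p | p 0 ∈ Set.Icc 0 ℓ ∧ p 1 ∈ Set.Icc 0 ℓ}

/-- The uniform probability measure on the square `[0, ℓ]²`. -/
def unifSq (ℓ : ℝ) : Measure Plane := (volume (square ℓ))⁻¹ • volume.restrict (square ℓ)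

/-- The joint law of `n` points `V₁, …, V_n` chosen independently and uniformly at random from
the square `[0, ℓ]²`. -/
def gMeasure (n : ℕ) (ℓ : ℝ) : Measure (Fin n → Plane) := Measure.pi fun _ => unifSq ℓ

/-- The (closed) neighborhood `N(i)` of vertex `i` in the unit disk graph on the points
`ω 0, …, ω (n-1)`: the vertex `i` together with all vertices adjacent to it. -/
def nbhd {n : ℕ} (ω : Fin n → Plane) (i : Fin n) : Set (Fin n) :=
  {j | j = i ∨ (j ≠ i ∧ dist (ω i) (ω j) ≤ 1)}

/-- Vertex `i` is pruned by Rule 2: there are `i₁ > i₂ > i` with `i₁, i₂ ∈ N(i)`, `i₁`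
adjacent to `i₂`, and `N(i) ⊆ N(i₁) ∪ N(i₂)`. (Here vertex IDs are ordered as the indices.) -/
def Pruned {n : ℕ} (ω : Fin n → Plane) (i : Fin n) : Prop :=
  ∃ i₁ i₂ : Fin n, i < i₂ ∧ i₂ < i₁ ∧ i₁ ∈ nbhd ω i ∧ i₂ ∈ nbhd ω i ∧
    dist (ω i₁) (ω i₂) ≤ 1 ∧ nbhd ω i ⊆ nbhd ω i₁ ∪ nbhd ω i₂

/-- `U` is the number of vertices pruned by Rule 2. -/
def U (n : ℕ) (ω : Fin n → Plane) : ℕ := Set.ncard {i : Fin n | Pruned ω i}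

/-- A parallelogram is the preimage of a rectangle under a linear map of determinant `1 + s t`. -/
lemma volume_parallelogram {s t : ℝ} (hst : 0 < 1 + s * t) (a b c d : ℝ) (hab : a ≤ b) :
    volume {p : Plane | p 0 + s * p 1 ∈ Icc a b ∧ p 1 - t * p 0 ∈ Icc c d} =
      ENNReal.ofReal ((b - a) * (d - c) / (1 + s * t)) := by
  set M : Matrix (Fin 2) (Fin 2) ℝ := !![1, s; -t, 1] with hM
  have hdet : LinearMap.det (Matrix.toLin' M) = 1 + s * t := by
    rw [LinearMap.det_toLin', hM, Matrix.det_fin_two_of]; ring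
  have hset : {p : Plane | p 0 + s * p 1 ∈ Icc a b ∧ p 1 - t * p 0 ∈ Icc c d} =
      (WithLp.ofLp : Plane → Fin 2 → ℝ) ⁻¹' (Matrix.toLin' M ⁻¹' (Icc ![a, c] ![b, d])) := by
    ext p
    simp only [mem_ofPred_eq, mem_preimage, mem_Icc, Pi.le_def, Fin.forall_fin_two, hM,
      Matrix.toLin'_apply, Matrix.mulVec, dotProduct, Fin.sum_univ_two, Matrix.of_apply,
      Matrix.cons_val_zero, Matrix.cons_val_one]
    constructor
    · rintro ⟨⟨h1, h2⟩, h3, h4⟩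
      exact ⟨⟨by linarith, by linarith⟩, by linarith, by linarith⟩
    · rintro ⟨⟨h1, h2⟩, h3, h4⟩
      exact ⟨⟨by linarith, by linarith⟩, by linarith, by linarith⟩
  have hmeas : MeasurableSet (Matrix.toLin' M ⁻¹' (Icc ![a, c] ![b, d])) :=
    (LinearMap.continuous_of_finiteDimensional (Matrix.toLin' M)).measurable measurableSet_Icc
  rw [hset, (PiLp.volume_preserving_ofLp (Fin 2)).measure_preimage
    hmeas.nullMeasurableSet, Measure.addHaar_preimage_linearMap _ (by rw [hdet]; exact hst.ne'),
    hdet, Real.volume_Icc_pi, Fin.prod_univ_two, abs_of_pos (inv_pos.2 hst)]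
  simp only [Matrix.cons_val_zero, Matrix.cons_val_one]
  rw [← ENNReal.ofReal_mul (sub_nonneg.2 hab), ← ENNReal.ofReal_mul (inv_pos.2 hst).le]
  congr 1
  rw [div_eq_inv_mul]

lemma measurableSet_parallelogram (s t a b c d : ℝ) :
    MeasurableSet {p : Plane | p 0 + s * p 1 ∈ Icc a b ∧ p 1 - t * p 0 ∈ Icc c d} := by
  apply MeasurableSet.inter
  · exact measurableSet_Icc.preimage (by fun_prop)
  · exact measurableSet_Icc.preimage (by fun_prop)

lemma volume_square {l : ℝ} (hl : 0 ≤ l) : volume (square l) = ENNReal.ofReal (l ^ 2) := by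
  have h := volume_parallelogram (s := 0) (t := 0) (by norm_num) 0 l 0 l hl
  simp only [zero_mul, add_zero, sub_zero, div_one] at h
  rw [sq, ← h]; rfl

lemma measurableSet_square (l : ℝ) : MeasurableSet (square l) := by
  simpa [square] using measurableSet_parallelogram 0 0 0 l 0 l

lemma isProbabilityMeasure_unifSq {l : ℝ} (hl : 0 < l) : IsProbabilityMeasure (unifSq l) := by
  constructor
  have h0 : volume (square l) ≠ 0 := by
    rw [volume_square hl.le]; simpa using hl.ne'
  have h1 : volume (square l) ≠ ⊤ := by
    rw [volume_square hl.le]; exact ENNReal.ofReal_ne_top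
  simp [unifSq, ENNReal.inv_mul_cancel h0 h1]

lemma unifSq_le {l v : ℝ} (hl : 0 < l) {A : Set Plane} (hA : volume A ≤ ENNReal.ofReal v) :
    unifSq l A ≤ ENNReal.ofReal (v / l ^ 2) := by
  have h2 : 0 < l ^ 2 := by positivity
  rw [unifSq, Measure.smul_apply, smul_eq_mul, volume_square hl.le, div_eq_inv_mul,
    ENNReal.ofReal_mul (inv_pos.2 h2).le, ENNReal.ofReal_inv_of_pos h2]
  gcongr
  exact (Measure.restrict_apply_le _ _).trans hA

lemma le_unifSq {l v : ℝ} (hl : 0 < l) {A : Set Plane} (hAl : A ⊆ square l)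
    (hA : ENNReal.ofReal v ≤ volume A) : ENNReal.ofReal (v / l ^ 2) ≤ unifSq l A := by
  have h2 : 0 < l ^ 2 := by positivity
  rw [unifSq, Measure.smul_apply, smul_eq_mul, volume_square hl.le, div_eq_inv_mul,
    ENNReal.ofReal_mul (inv_pos.2 h2).le, ENNReal.ofReal_inv_of_pos h2]
  gcongr
  rwa [Measure.restrict_eq_self _ hAl]

lemma volume_preimage_sub (v : Plane) (A : Set Plane) :
    volume {p : Plane | p - v ∈ A} = volume A := by
  have := measure_preimage_add_right (volume : Measure Plane) (-v) A
  simpa [← sub_eq_add_neg, Set.preimage] using this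

lemma unifSq_compl_le {l v : ℝ} (hl : 0 < l) {A : Set Plane} (hm : MeasurableSet A)
    (hAl : A ⊆ square l) (hA : ENNReal.ofReal v ≤ volume A) :
    unifSq l Aᶜ ≤ ENNReal.ofReal (Real.exp (-(v / l ^ 2))) := by
  have := isProbabilityMeasure_unifSq hl
  rw [prob_compl_eq_one_sub hm]
  have h1 := le_unifSq hl hAl hA
  calc 1 - unifSq l A ≤ 1 - ENNReal.ofReal (v / l ^ 2) := by gcongr
    _ ≤ ENNReal.ofReal (1 - v / l ^ 2) := by
      rw [tsub_le_iff_right, ← ENNReal.ofReal_one]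
      exact (ENNReal.ofReal_le_ofReal (by linarith)).trans ENNReal.ofReal_add_le
    _ ≤ _ := ENNReal.ofReal_le_ofReal (by
      have := Real.add_one_le_exp (-(v / l ^ 2)); linarith)

/-- If, whatever the coordinates outside `J`, membership in `S` forces every coordinate in `J`
into a set `B`, then `S` has measure at most `μ(B) ^ #J`. -/
lemma pi_measure_le {ι E : Type*} [Fintype ι] [MeasurableSpace E] (μ : Measure E)
    [IsProbabilityMeasure μ] {S : Set (ι → E)} (hS : MeasurableSet S) (J : Finset ι) (c : ℝ≥0∞)
    (h : ∀ ω : ι → E, ∃ B : Set E, μ B ^ J.card ≤ c ∧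
      ∀ ω' : ι → E, (∀ j ∉ J, ω' j = ω j) → ω' ∈ S → ∀ j ∈ J, ω' j ∈ B) :
    Measure.pi (fun _ : ι => μ) S ≤ c := by
  classical
  have hmp := measurePreserving_piEquivPiSubtypeProd (fun _ : ι => μ) (fun j => j ∉ J)
  set e := MeasurableEquiv.piEquivPiSubtypeProd (fun _ : ι => E) (fun j => j ∉ J) with he
  have hS' : MeasurableSet (e.symm ⁻¹' S) := e.symm.measurable hS
  have : S = e ⁻¹' (e.symm ⁻¹' S) := by ext; simp
  rw [this, hmp.measure_preimage hS'.nullMeasurableSet, Measure.prod_apply hS']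
  have hne : Nonempty E := by
    by_contra hE
    rw [not_nonempty_iff] at hE
    exact IsProbabilityMeasure.ne_zero μ (Measure.eq_zero_of_isEmpty μ)
  calc _ ≤ ∫⁻ _, c ∂(Measure.pi fun _ : {j // j ∉ J} => μ) := by
        refine lintegral_mono fun x => ?_
        obtain ⟨B, hB, hB'⟩ := h (e.symm (x, fun _ => Classical.arbitrary E))
        have hsub : Prod.mk x ⁻¹' (e.symm ⁻¹' S) ⊆
            Set.univ.pi (fun _ : {j // ¬ j ∉ J} => B) := by
          intro y hy j _
          have := hB' (e.symm (x, y)) (fun k hk => by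
            simp [he, MeasurableEquiv.piEquivPiSubtypeProd, hk]) hy j.1 (not_not.1 j.2)
          simpa [he, MeasurableEquiv.piEquivPiSubtypeProd, j.2] using this
        refine (measure_mono hsub).trans ?_
        rw [Measure.pi_pi, Finset.prod_const, Finset.card_univ, Fintype.card_subtype]
        simpa using hB
    _ = c := by simp

lemma plane_norm_sq (u : Plane) : ‖u‖ ^ 2 = u 0 ^ 2 + u 1 ^ 2 := by
  rw [EuclideanSpace.real_norm_sq_eq, Fin.sum_univ_two]

/-- The sector of displacements at distance of order `ε` with slope between `s` and `s + h`. -/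
def sector (ε h s : ℝ) : Set Plane := {p | p 0 ∈ Icc ε (2 * ε) ∧ p 1 - s * p 0 ∈ Icc 0 (h * ε)}

/-- The displacements at distance of order `ε` that are nearly opposite to `d`. -/
def opposite (ε : ℝ) (d : Plane) : Set Plane :=
  {p | p 0 ∈ Icc (-(2 * ε)) (-ε) ∧ p 1 - d 1 / d 0 * p 0 ∈ Icc (-ε ^ 2) (ε ^ 2)}

/-- The part of the unit disk around the origin outside the unit disks around `d` and `e`. -/
def uncovered (d e : Plane) : Set Plane := {u | ‖u‖ ≤ 1 ∧ 1 < ‖u - d‖ ∧ 1 < ‖u - e‖}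

lemma measurableSet_sector (ε h s : ℝ) : MeasurableSet (sector ε h s) := by
  simpa [sector] using measurableSet_parallelogram 0 s ε (2 * ε) 0 (h * ε)

lemma volume_sector {ε h s : ℝ} (hε : 0 ≤ ε) :
    volume (sector ε h s) = ENNReal.ofReal (h * ε ^ 2) := by
  have := volume_parallelogram (s := 0) (t := s) (by simp) ε (2 * ε) 0 (h * ε) (by linarith)
  simp only [zero_mul, add_zero, div_one, sub_zero] at this
  rw [sector, this]
  congr 1; ring

lemma measurableSet_opposite (ε : ℝ) (d : Plane) : MeasurableSet (opposite ε d) := by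
  simpa [opposite] using
    measurableSet_parallelogram 0 (d 1 / d 0) (-(2 * ε)) (-ε) (-ε ^ 2) (ε ^ 2)

lemma volume_opposite {ε : ℝ} (hε : 0 ≤ ε) (d : Plane) :
    volume (opposite ε d) = ENNReal.ofReal (2 * ε ^ 3) := by
  have := volume_parallelogram (s := 0) (t := d 1 / d 0) (by simp) (-(2 * ε)) (-ε) (-ε ^ 2)
    (ε ^ 2) (by linarith)
  simp only [zero_mul, add_zero, div_one] at this
  rw [opposite, this]
  congr 1; ring

/-- The displacements with slope in `[0, 1]` and first coordinate in `[ε, 2ε]`. -/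
def wedge (ε : ℝ) : Set Plane := {p | p 0 ∈ Icc ε (2 * ε) ∧ p 1 ∈ Icc 0 (p 0)}

lemma sector_subset_wedge {ε h s : ℝ} (hε : 0 < ε) (hh : 0 ≤ h) (hs : 0 ≤ s) (hsh : s + h ≤ 1) :
    sector ε h s ⊆ wedge ε := by
  rintro p ⟨⟨h1, h2⟩, h3, h4⟩
  refine ⟨⟨h1, h2⟩, ?_, ?_⟩
  · nlinarith [mul_nonneg hs (hε.le.trans h1)]
  · nlinarith [mul_le_mul_of_nonneg_left h1 hh,
      mul_le_mul_of_nonneg_right hsh (hε.le.trans h1)]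

lemma slope_of_mem_sector {ε h s : ℝ} (hε : 0 < ε) (hh : 0 ≤ h) {d : Plane}
    (hd : d ∈ sector ε h s) : d 1 / d 0 ∈ Icc s (s + h) := by
  obtain ⟨⟨h1, h2⟩, h3, h4⟩ := hd
  have h0 : 0 < d 0 := hε.trans_le h1
  constructor
  · rw [le_div_iff₀ h0]; linarith
  · rw [div_le_iff₀ h0]; nlinarith [mul_le_mul_of_nonneg_left h1 hh]

lemma disjoint_opposite {ε : ℝ} (hε : 0 < ε) {d e : Plane}
    (hde : 2 * ε < e 1 / e 0 - d 1 / d 0) : Disjoint (opposite ε d) (opposite ε e) := by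
  rw [Set.disjoint_left]
  rintro p ⟨⟨h1, h2⟩, h3, h4⟩ ⟨-, h5, h6⟩
  nlinarith [mul_lt_mul_of_pos_right hde (show 0 < -p 0 by linarith)]

lemma slope_of_mem_wedge {ε : ℝ} (hε : 0 < ε) {d : Plane} (hd : d ∈ wedge ε) :
    0 ≤ d 1 / d 0 ∧ d 1 / d 0 ≤ 1 := by
  obtain ⟨⟨h1, h2⟩, h3, h4⟩ := hd
  have h0 : 0 < d 0 := hε.trans_le h1
  exact ⟨div_nonneg h3 h0.le, by rw [div_le_iff₀ h0]; linarith⟩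

lemma norm_le_of_mem_wedge {ε : ℝ} (hε : 0 < ε) {d : Plane} (hd : d ∈ wedge ε) :
    ‖d‖ ≤ 4 * ε := by
  obtain ⟨⟨h1, h2⟩, h3, h4⟩ := hd
  refine abs_le_of_sq_le_sq' ?_ (by positivity) |>.2
  rw [plane_norm_sq]; nlinarith

lemma abs_le_of_mem_opposite {ε : ℝ} (hε : 0 < ε) (hε1 : ε ≤ 1) {d e : Plane}
    (hd : d ∈ wedge ε) (he : e ∈ opposite ε d) : |e 0| ≤ 2 * ε ∧ |e 1| ≤ 3 * ε := by
  obtain ⟨hs0, hs1⟩ := slope_of_mem_wedge hε hd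
  obtain ⟨⟨h1, h2⟩, h3, h4⟩ := he
  have := mul_le_mul_of_nonneg_right hs1 (show 0 ≤ -e 0 by linarith)
  have := mul_nonneg hs0 (show 0 ≤ -e 0 by linarith)
  constructor <;> rw [abs_le] <;> constructor <;> nlinarith

lemma norm_le_of_mem_opposite {ε : ℝ} (hε : 0 < ε) (hε1 : ε ≤ 1) {d e : Plane}
    (hd : d ∈ wedge ε) (he : e ∈ opposite ε d) : ‖e‖ ≤ 4 * ε := by
  obtain ⟨h0, h1⟩ := abs_le_of_mem_opposite hε hε1 hd he
  refine abs_le_of_sq_le_sq' ?_ (by positivity) |>.2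
  rw [plane_norm_sq, ← sq_abs (e 0), ← sq_abs (e 1)]
  nlinarith [abs_nonneg (e 0), abs_nonneg (e 1)]

/-- In coordinates along and across a direction of slope `σ`, the uncovered region lies in a
strip of width of order `ε` and at depth of order `ε²` below the unit circle. -/
lemma uncovered_bounds {ε σ x X τ a b : ℝ} (hε : 0 < ε) (hε1 : ε ≤ 1) (hσ0 : 0 ≤ σ)
    (hσ1 : σ ≤ 1) (hx : ε ≤ x) (hx' : x ≤ 2 * ε) (hX : ε ≤ X) (hX' : X ≤ 2 * ε)
    (hτ : -ε ^ 2 ≤ τ) (hτ' : τ ≤ ε ^ 2) (hu : a ^ 2 + b ^ 2 ≤ 1)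
    (h1 : 1 < (a - x) ^ 2 + (b - σ * x) ^ 2)
    (h2 : 1 < (a + X) ^ 2 + (b - (-σ * X + τ)) ^ 2) :
    -(8 * ε) ≤ a + σ * b ∧ a + σ * b ≤ 8 * ε ∧ 1 - 15 * ε ^ 2 ≤ a ^ 2 + b ^ 2 := by
  have hb : b ^ 2 ≤ 1 := by nlinarith
  have hb1 : -1 ≤ b := by nlinarith
  have hb2 : b ≤ 1 := by nlinarith
  have hσx : x ^ 2 * (1 + σ ^ 2) ≤ 8 * ε ^ 2 := by
    have : x ^ 2 ≤ 4 * ε ^ 2 := by nlinarith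
    have : σ ^ 2 ≤ 1 := by nlinarith
    nlinarith [sq_nonneg x]
  have hbτ : -ε ^ 2 ≤ b * τ := by
    nlinarith [mul_nonneg (sub_nonneg.2 hb2) (sub_nonneg.2 hτ),
      mul_nonneg (sub_nonneg.2 hb1) (sub_nonneg.2 hτ'), mul_nonneg (sub_nonneg.2 hb2)
      (sub_nonneg.2 hτ'), mul_nonneg (sub_nonneg.2 hb1) (sub_nonneg.2 hτ)]
  have hy : |-σ * X + τ| ≤ 3 * ε := by
    rw [abs_le]; constructor <;> nlinarith [mul_le_mul_of_nonneg_right hσ1 (hε.le.trans hX),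
      mul_nonneg hσ0 (hε.le.trans hX)]
  have hy2 : (-σ * X + τ) ^ 2 ≤ 9 * ε ^ 2 := by
    rw [← sq_abs]; nlinarith [abs_nonneg (-σ * X + τ)]
  have hd2 : X ^ 2 + (-σ * X + τ) ^ 2 ≤ 13 * ε ^ 2 := by nlinarith
  have e1 : 1 + 2 * x * (a + σ * b) - 8 * ε ^ 2 ≤ a ^ 2 + b ^ 2 := by nlinarith
  have e2 : 1 - 2 * X * (a + σ * b) - 15 * ε ^ 2 ≤ a ^ 2 + b ^ 2 := by nlinarith
  refine ⟨?_, ?_, ?_⟩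
  · by_contra! hlt
    nlinarith
  · by_contra! hlt
    nlinarith
  · rcases le_total 0 (a + σ * b) with h | h
    · linarith [mul_nonneg (hε.le.trans hx) h, sq_nonneg ε]
    · linarith [mul_nonneg (hε.le.trans hX) (neg_nonneg.2 h)]

lemma volume_uncovered_le {ε : ℝ} (hε : 0 < ε) (hε1 : ε ≤ 1) {d e : Plane}
    (hd : d ∈ wedge ε) (he : e ∈ opposite ε d) :
    volume (uncovered d e) ≤ ENNReal.ofReal (3008 * ε ^ 3) := by
  obtain ⟨hs0, hs1⟩ := slope_of_mem_wedge hε hd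
  set σ := d 1 / d 0 with hσ
  have h0 : 0 < d 0 := hε.trans_le hd.1.1
  have hd1 : d 1 = σ * d 0 := by rw [hσ]; field_simp
  set r := √(1 + σ ^ 2) with hr
  have hr2 : r ^ 2 = 1 + σ ^ 2 := Real.sq_sqrt (by positivity)
  have hr1 : 1 ≤ r := by rw [hr, Real.one_le_sqrt]; nlinarith
  have hdet : 0 < 1 + σ * σ := by nlinarith
  have hsub : uncovered d e ⊆
      {p : Plane | p 0 + σ * p 1 ∈ Icc (-(8 * ε)) (8 * ε) ∧
        p 1 - σ * p 0 ∈ Icc (r - 94 * ε ^ 2) r} ∪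
      {p : Plane | p 0 + σ * p 1 ∈ Icc (-(8 * ε)) (8 * ε) ∧
        p 1 - σ * p 0 ∈ Icc (-r) (-r + 94 * ε ^ 2)} := by
    rintro u ⟨hu, hud, hue⟩
    have hu' : u 0 ^ 2 + u 1 ^ 2 ≤ 1 := by
      rw [← plane_norm_sq]; nlinarith [norm_nonneg u]
    have hud' : 1 < (u 0 - d 0) ^ 2 + (u 1 - σ * d 0) ^ 2 := by
      have := plane_norm_sq (u - d)
      simp only [PiLp.sub_apply] at this
      rw [← hd1, ← this]; nlinarith
    have hue' : 1 < (u 0 + -e 0) ^ 2 + (u 1 - (-σ * -e 0 + (e 1 - σ * e 0))) ^ 2 := by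
      have := plane_norm_sq (u - e)
      simp only [PiLp.sub_apply] at this
      rw [show (u 0 + -e 0) ^ 2 + (u 1 - (-σ * -e 0 + (e 1 - σ * e 0))) ^ 2
        = (u 0 - e 0) ^ 2 + (u 1 - e 1) ^ 2 by ring, ← this]; nlinarith
    obtain ⟨hp1, hp2, hp3⟩ := uncovered_bounds hε hε1 hs0 hs1 hd.1.1 hd.1.2
      (by linarith [he.1.2]) (by linarith [he.1.1]) he.2.1 he.2.2 hu' hud' hue'
    have hPQ : (u 0 + σ * u 1) ^ 2 + (u 1 - σ * u 0) ^ 2 = r ^ 2 * (u 0 ^ 2 + u 1 ^ 2) := by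
      rw [hr2]; ring
    set P := u 0 + σ * u 1
    set Q := u 1 - σ * u 0
    have hP : P ^ 2 ≤ 64 * ε ^ 2 := by
      linarith [mul_nonneg (sub_nonneg.2 hp2) (show 0 ≤ P + 8 * ε by linarith)]
    have hr3 : r ^ 2 ≤ 2 := by
      linarith [mul_nonneg hs0 (sub_nonneg.2 hs1)]
    have hQ1 : Q ^ 2 ≤ r ^ 2 := by
      linarith [sq_nonneg P, mul_le_mul_of_nonneg_left hu' (sq_nonneg r)]
    have hQ2 : r ^ 2 - 94 * ε ^ 2 ≤ Q ^ 2 := by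
      linarith [mul_le_mul_of_nonneg_left hp3 (sq_nonneg r),
        mul_le_mul_of_nonneg_right hr3 (sq_nonneg ε)]
    obtain ⟨hQ3, hQ4⟩ := abs_le_of_sq_le_sq' hQ1 (by linarith)
    rcases le_total 0 Q with hQ | hQ
    · refine Or.inl ⟨⟨hp1, hp2⟩, ?_, hQ4⟩
      linarith [mul_nonneg (sub_nonneg.2 hQ4) (show 0 ≤ r + Q - 1 by linarith)]
    · refine Or.inr ⟨⟨hp1, hp2⟩, hQ3, ?_⟩
      linarith [mul_nonneg (show 0 ≤ r + Q by linarith) (show 0 ≤ r - Q - 1 by linarith)]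
  refine (measure_mono hsub).trans ((measure_union_le _ _).trans ?_)
  rw [volume_parallelogram hdet _ _ _ _ (by linarith), volume_parallelogram hdet _ _ _ _
    (by linarith), ← ENNReal.ofReal_add (div_nonneg (by ring_nf; positivity) hdet.le)
    (div_nonneg (by ring_nf; positivity) hdet.le)]
  refine ENNReal.ofReal_le_ofReal ?_
  rw [← add_div, div_le_iff₀ hdet]
  have : 0 ≤ ε ^ 3 * (σ * σ) := by positivity
  nlinarith

/-- The points of `[0, l]²` at distance at least `4ε` from its boundary. -/
def innerSquare (l ε : ℝ) : Set Plane :=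
  {p | p 0 ∈ Icc (4 * ε) (l - 4 * ε) ∧ p 1 ∈ Icc (4 * ε) (l - 4 * ε)}

lemma measurableSet_innerSquare (l ε : ℝ) : MeasurableSet (innerSquare l ε) := by
  simpa [innerSquare] using
    measurableSet_parallelogram 0 0 (4 * ε) (l - 4 * ε) (4 * ε) (l - 4 * ε)

lemma unifSq_innerSquare_compl_le {l ε : ℝ} (hl : 0 < l) (hε : 0 < ε) (hεl : 8 * ε ≤ l) :
    unifSq l (innerSquare l ε)ᶜ ≤ ENNReal.ofReal (16 * ε / l) := by
  have := isProbabilityMeasure_unifSq hl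
  have hsub : innerSquare l ε ⊆ square l := by
    rintro p ⟨⟨h1, h2⟩, h3, h4⟩
    exact ⟨⟨by linarith, by linarith⟩, by linarith, by linarith⟩
  have hvol : volume (innerSquare l ε) = ENNReal.ofReal ((l - 8 * ε) ^ 2) := by
    have h := volume_parallelogram (s := 0) (t := 0) (by norm_num) (4 * ε) (l - 4 * ε) (4 * ε)
      (l - 4 * ε) (by linarith)
    simp only [zero_mul, add_zero, sub_zero, div_one] at h
    rw [innerSquare, h]
    congr 1; ring
  rw [prob_compl_eq_one_sub (measurableSet_innerSquare l ε)]
  calc 1 - unifSq l (innerSquare l ε) ≤ 1 - ENNReal.ofReal ((l - 8 * ε) ^ 2 / l ^ 2) := by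
        gcongr; exact le_unifSq hl hsub hvol.ge
    _ ≤ ENNReal.ofReal (16 * ε / l) := by
      rw [tsub_le_iff_right, ← ENNReal.ofReal_one,
        ← ENNReal.ofReal_add (by positivity) (by positivity)]
      refine ENNReal.ofReal_le_ofReal ?_
      rw [div_add_div _ _ hl.ne' (by positivity), le_div_iff₀ (by positivity)]
      nlinarith [mul_pos hl (pow_pos hε 2)]

lemma add_mem_square {l ε : ℝ} {v p : Plane} (hv : v ∈ innerSquare l ε)
    (h0 : |(p - v) 0| ≤ 4 * ε) (h1 : |(p - v) 1| ≤ 4 * ε) : p ∈ square l := by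
  obtain ⟨⟨a1, a2⟩, a3, a4⟩ := hv
  simp only [PiLp.sub_apply, abs_le] at h0 h1
  exact ⟨⟨by linarith, by linarith⟩, by linarith, by linarith⟩

lemma abs_le_of_mem_wedge {ε : ℝ} (hε : 0 < ε) {d : Plane} (hd : d ∈ wedge ε) :
    |d 0| ≤ 4 * ε ∧ |d 1| ≤ 4 * ε := by
  obtain ⟨⟨h1, h2⟩, h3, h4⟩ := hd
  constructor <;> rw [abs_le] <;> constructor <;> linarith

section Events

variable {n : ℕ} (l ε h : ℝ) (M : ℕ) (i : Fin n) (J₁ J₂ : Finset (Fin n))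

/-- No vertex of `J₁` lies in the sector of slope `s` at `i`, a vertex away from the boundary. -/
def missSector (s : ℝ) : Set (Fin n → Plane) :=
  {ω | ω i ∈ innerSquare l ε ∧ ∀ j ∈ J₁, ω j - ω i ∉ sector ε h s}

/-- The pair `q` consists of nearly antipodal vertices close to `i`. -/
def GoodPair (ω : Fin n → Plane) (q : Fin n × Fin n) : Prop :=
  q.1 ∈ J₁ ∧ q.2 ∈ J₂ ∧ ω q.1 - ω i ∈ wedge ε ∧ ω q.2 - ω i ∈ opposite ε (ω q.1 - ω i)

/-- Every sector at `i` is hit, but there is no good pair. -/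
def missOpposite : Set (Fin n → Plane) :=
  {ω | ω i ∈ innerSquare l ε ∧
    (∀ b ∈ Finset.range M, ∃ j ∈ J₁, ω j - ω i ∈ sector ε h (2 * h * b)) ∧
    ∀ q, ¬ GoodPair ε i J₁ J₂ ω q}

/-- The pair `q` is the first good pair in a fixed enumeration of all pairs. -/
def FirstGoodPair (ω : Fin n → Plane) (q : Fin n × Fin n) : Prop :=
  GoodPair ε i J₁ J₂ ω q ∧
    ∀ q', GoodPair ε i J₁ J₂ ω q' → Encodable.encode q ≤ Encodable.encode q'

/-- The vertex `j` is a neighbour of `i` not covered by the first good pair. -/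
def exposed (j : Fin n) : Set (Fin n → Plane) :=
  {ω | ∃ q, FirstGoodPair ε i J₁ J₂ ω q ∧
    ω j - ω i ∈ uncovered (ω q.1 - ω i) (ω q.2 - ω i)}

lemma measurableSet_missSector (s : ℝ) : MeasurableSet (missSector l ε h i J₁ s) := by
  refine MeasurableSet.inter ((measurableSet_innerSquare l ε).preimage (by fun_prop)) ?_
  have : {ω : Fin n → Plane | ∀ j ∈ J₁, ω j - ω i ∉ sector ε h s} =
      ⋂ j ∈ J₁, (fun ω => ω j - ω i) ⁻¹' (sector ε h s)ᶜ := by ext; simp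
  change MeasurableSet {ω : Fin n → Plane | ∀ j ∈ J₁, ω j - ω i ∉ sector ε h s}
  rw [this]
  exact Finset.measurableSet_biInter _ fun j _ =>
    (measurableSet_sector ε h s).compl.preimage (by fun_prop)

lemma measurableSet_goodPair (q : Fin n × Fin n) :
    MeasurableSet {ω : Fin n → Plane | GoodPair ε i J₁ J₂ ω q} := by
  unfold GoodPair
  refine (MeasurableSet.const _).inter ((MeasurableSet.const _).inter (MeasurableSet.inter ?_ ?_))
  · refine MeasurableSet.inter (measurableSet_Icc.preimage (by fun_prop)) ?_
    refine MeasurableSet.inter ?_ ?_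
    · change MeasurableSet {ω : Fin n → Plane | 0 ≤ (ω q.1 - ω i) 1}
      exact measurableSet_le (by fun_prop) (by fun_prop)
    · change MeasurableSet {ω : Fin n → Plane | (ω q.1 - ω i) 1 ≤ (ω q.1 - ω i) 0}
      exact measurableSet_le (by fun_prop) (by fun_prop)
  · refine MeasurableSet.inter (measurableSet_Icc.preimage (by fun_prop)) ?_
    exact measurableSet_Icc.preimage (by fun_prop)

lemma measurableSet_missOpposite : MeasurableSet (missOpposite l ε h M i J₁ J₂) := by
  refine MeasurableSet.inter ((measurableSet_innerSquare l ε).preimage (by fun_prop))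
    (MeasurableSet.inter ?_ ?_)
  · have : {ω : Fin n → Plane | ∀ b ∈ Finset.range M, ∃ j ∈ J₁,
        ω j - ω i ∈ sector ε h (2 * h * b)} = ⋂ b ∈ Finset.range M, ⋃ j ∈ J₁,
        (fun ω => ω j - ω i) ⁻¹' (sector ε h (2 * h * b)) := by ext; simp
    change MeasurableSet {ω : Fin n → Plane | ∀ b ∈ Finset.range M, ∃ j ∈ J₁,
        ω j - ω i ∈ sector ε h (2 * h * b)}
    rw [this]
    exact Finset.measurableSet_biInter _ fun b _ => Finset.measurableSet_biUnion _ fun j _ =>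
      (measurableSet_sector ε h _).preimage (by fun_prop)
  · have : {ω : Fin n → Plane | ∀ q, ¬ GoodPair ε i J₁ J₂ ω q} =
      ⋂ q, {ω | GoodPair ε i J₁ J₂ ω q}ᶜ := by ext; simp
    change MeasurableSet {ω : Fin n → Plane | ∀ q, ¬ GoodPair ε i J₁ J₂ ω q}
    rw [this]
    exact MeasurableSet.iInter fun q => (measurableSet_goodPair ε i J₁ J₂ q).compl

lemma measurableSet_exposed (j : Fin n) : MeasurableSet (exposed ε i J₁ J₂ j) := by
  have : exposed ε i J₁ J₂ j = ⋃ q, (({ω | GoodPair ε i J₁ J₂ ω q} ∩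
      ⋂ q', ({ω | GoodPair ε i J₁ J₂ ω q'}ᶜ ∪
        {_ω | Encodable.encode q ≤ Encodable.encode q'})) ∩
      {ω | ω j - ω i ∈ uncovered (ω q.1 - ω i) (ω q.2 - ω i)}) := by
    ext ω
    simp [exposed, FirstGoodPair, imp_iff_not_or]
  rw [this]
  refine MeasurableSet.iUnion fun q => ((measurableSet_goodPair ε i J₁ J₂ q).inter
    (MeasurableSet.iInter fun q' => (measurableSet_goodPair ε i J₁ J₂ q').compl.union
      (MeasurableSet.const _))).inter ?_
  refine MeasurableSet.inter ?_ (MeasurableSet.inter ?_ ?_)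
  · change MeasurableSet {ω : Fin n → Plane | ‖ω j - ω i‖ ≤ 1}
    exact measurableSet_le (by fun_prop) (by fun_prop)
  · change MeasurableSet {ω : Fin n → Plane | 1 < ‖ω j - ω i - (ω q.1 - ω i)‖}
    exact measurableSet_lt (by fun_prop) (by fun_prop)
  · change MeasurableSet {ω : Fin n → Plane | 1 < ‖ω j - ω i - (ω q.2 - ω i)‖}
    exact measurableSet_lt (by fun_prop) (by fun_prop)

end Events

lemma ofReal_exp_pow (x : ℝ) (m : ℕ) :
    ENNReal.ofReal (Real.exp (-x)) ^ m = ENNReal.ofReal (Real.exp (-(m * x))) := by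
  rw [← ENNReal.ofReal_pow (Real.exp_pos _).le, ← Real.exp_nat_mul]
  congr 2; ring

section Bounds

variable {n : ℕ} {l ε h : ℝ} {M : ℕ} {i : Fin n} {J₁ J₂ : Finset (Fin n)}

lemma gMeasure_nearBoundary_le (hl : 0 < l) (hε : 0 < ε) (hεl : 8 * ε ≤ l) :
    gMeasure n l {ω | ω i ∉ innerSquare l ε} ≤ ENNReal.ofReal (16 * ε / l) := by
  have := isProbabilityMeasure_unifSq hl
  refine pi_measure_le (unifSq l) ?_ {i} _ fun ω => ⟨(innerSquare l ε)ᶜ, ?_, ?_⟩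
  · exact (measurableSet_innerSquare l ε).compl.preimage (measurable_pi_apply i)
  · simpa using unifSq_innerSquare_compl_le hl hε hεl
  · rintro ω' - hω' j hj
    rw [Finset.mem_singleton.1 hj]; exact hω'

lemma gMeasure_missSector_le (hl : 0 < l) (hε : 0 < ε) (hh : 0 ≤ h) {s : ℝ} (hs : 0 ≤ s)
    (hsh : s + h ≤ 1) (hi : i ∉ J₁) (hJ : J₁.Nonempty) :
    gMeasure n l (missSector l ε h i J₁ s) ≤
      ENNReal.ofReal (Real.exp (-(J₁.card * (h * ε ^ 2 / l ^ 2)))) := by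
  have := isProbabilityMeasure_unifSq hl
  refine pi_measure_le (unifSq l) (measurableSet_missSector l ε h i J₁ s) J₁ _ fun ω => ?_
  by_cases hv : ω i ∈ innerSquare l ε
  · refine ⟨{p | p - ω i ∈ sector ε h s}ᶜ, ?_, ?_⟩
    · rw [← ofReal_exp_pow]
      gcongr
      refine unifSq_compl_le hl ((measurableSet_sector ε h s).preimage (by fun_prop)) ?_ ?_
      · intro p hp
        have := abs_le_of_mem_wedge hε (sector_subset_wedge hε hh hs hsh hp)
        exact add_mem_square hv this.1 this.2
      · rw [volume_preimage_sub, volume_sector hε.le]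
    · rintro ω' heq ⟨-, hω'⟩ j hj
      rw [← heq i hi]
      exact hω' j hj
  · refine ⟨∅, by simp [hJ.ne_empty], ?_⟩
    rintro ω' heq ⟨hω', -⟩
    exact absurd (heq i hi ▸ hω') hv

lemma gMeasure_missOpposite_le (hl : 0 < l) (hε : 0 < ε) (hε1 : ε ≤ 1) (hh : 2 * ε < h)
    (hM : 2 * h * M ≤ 1) (hi : i ∉ J₂) (hJ : J₂.Nonempty) (hdisj : Disjoint J₁ J₂) :
    gMeasure n l (missOpposite l ε h M i J₁ J₂) ≤
      ENNReal.ofReal (Real.exp (-(J₂.card * (M * (2 * ε ^ 3) / l ^ 2)))) := by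
  have := isProbabilityMeasure_unifSq hl
  have hh0 : 0 < h := by linarith
  refine pi_measure_le (unifSq l) (measurableSet_missOpposite l ε h M i J₁ J₂) J₂ _ fun ω => ?_
  by_cases hv : ω i ∈ innerSquare l ε ∧
    ∀ b ∈ Finset.range M, ∃ j ∈ J₁, ω j - ω i ∈ sector ε h (2 * h * b)
  · obtain ⟨hv, hsec⟩ := hv
    have : Nonempty (Fin n) := ⟨i⟩
    choose! f hf hf' using hsec
    set d : ℕ → Plane := fun b => ω (f b) - ω i with hd
    have hwedge : ∀ b ∈ Finset.range M, d b ∈ wedge ε := by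
      intro b hb
      refine sector_subset_wedge hε hh0.le (by positivity) ?_ (hf' b hb)
      have : (b : ℝ) + 1 ≤ M := by exact_mod_cast Finset.mem_range.1 hb
      nlinarith
    have hlt : ∀ b ∈ Finset.range M, ∀ b' ∈ Finset.range M, b < b' →
        Disjoint (opposite ε (d b)) (opposite ε (d b')) := by
      intro b hb b' hb' hbb
      apply disjoint_opposite hε
      have h1 := (slope_of_mem_sector hε hh0.le (hf' b hb)).2
      have h2 := (slope_of_mem_sector hε hh0.le (hf' b' hb')).1
      have : (b : ℝ) + 1 ≤ b' := by exact_mod_cast hbb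
      have : d b 1 / d b 0 + h ≤ d b' 1 / d b' 0 := by
        simp only [hd]; nlinarith
      linarith
    set A : Set Plane := ⋃ b ∈ Finset.range M, opposite ε (d b) with hA
    have hAm : MeasurableSet A :=
      Finset.measurableSet_biUnion _ fun b _ => measurableSet_opposite ε _
    have hvol : volume A = ENNReal.ofReal (M * (2 * ε ^ 3)) := by
      rw [hA, measure_biUnion_finset ?_ fun b _ => measurableSet_opposite ε _]
      · simp only [volume_opposite hε.le, Finset.sum_const, Finset.card_range, nsmul_eq_mul]
        rw [ENNReal.ofReal_mul (p := (M : ℝ)) (by positivity), ENNReal.ofReal_natCast]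
      · intro b hb b' hb' hne
        rcases lt_or_gt_of_ne hne with hlt' | hlt'
        · exact hlt b hb b' hb' hlt'
        · exact (hlt b' hb' b hb hlt').symm
    refine ⟨{p | p - ω i ∈ A}ᶜ, ?_, ?_⟩
    · rw [← ofReal_exp_pow]
      gcongr
      refine unifSq_compl_le hl (hAm.preimage (by fun_prop)) ?_ ?_
      · intro p hp
        obtain ⟨b, hb, hp⟩ := Set.mem_iUnion₂.1 (show p - ω i ∈ A from hp)
        have := abs_le_of_mem_opposite hε hε1 (hwedge b hb) hp
        exact add_mem_square hv (by linarith [this.1]) (by linarith [this.2])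
      · rw [volume_preimage_sub, hvol]
    · rintro ω' heq ⟨-, -, hω'⟩ j hj hjA
      obtain ⟨b, hb, hp⟩ := Set.mem_iUnion₂.1 (show ω' j - ω i ∈ A from hjA)
      have hfb : f b ∉ J₂ := Finset.disjoint_left.1 hdisj (hf b hb)
      refine hω' (f b, j) ⟨hf b hb, hj, ?_, ?_⟩
      · simpa only [heq _ hfb, heq i hi] using hwedge b hb
      · simpa only [heq _ hfb, heq i hi] using hp
  · refine ⟨∅, by simp [hJ.ne_empty], ?_⟩
    rintro ω' heq ⟨hω', hsec, -⟩
    refine absurd ⟨heq i hi ▸ hω', fun b hb => ?_⟩ hv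
    obtain ⟨j, hj, hj'⟩ := hsec b hb
    refine ⟨j, hj, ?_⟩
    rwa [heq i hi, heq j (Finset.disjoint_left.1 hdisj hj)] at hj'

lemma not_uncovered_of_norm_le {ε : ℝ} (hε8 : 8 * ε ≤ 1) {u d e : Plane} (hu : ‖u‖ ≤ 4 * ε)
    (hd : ‖d‖ ≤ 4 * ε) : u ∉ uncovered d e := by
  rintro ⟨-, h, -⟩
  linarith [norm_sub_le u d]

lemma gMeasure_exposed_le (hl : 0 < l) (hε : 0 < ε) (hε8 : 8 * ε ≤ 1) {j : Fin n} (hij : i ≠ j) :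
    gMeasure n l (exposed ε i J₁ J₂ j) ≤ ENNReal.ofReal (3008 * ε ^ 3 / l ^ 2) := by
  have := isProbabilityMeasure_unifSq hl
  have hε1 : ε ≤ 1 := by linarith
  refine pi_measure_le (unifSq l) (measurableSet_exposed ε i J₁ J₂ j) {j} _ fun ω => ?_
  by_cases hex : ∃ ω₀ : Fin n → Plane, (∀ k ∉ ({j} : Finset (Fin n)), ω₀ k = ω k) ∧
    ω₀ ∈ exposed ε i J₁ J₂ j
  swap
  · exact ⟨∅, by simp, fun ω' h1 h2 => absurd ⟨ω', h1, h2⟩ hex⟩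
  have key : ∀ ω₁ : Fin n → Plane, ω₁ ∈ exposed ε i J₁ J₂ j →
      ∀ q, GoodPair ε i J₁ J₂ ω₁ q → q.1 ≠ j ∧ q.2 ≠ j := by
    rintro ω₁ ⟨q₁, hq₁, hu⟩ q hq
    have hd := norm_le_of_mem_wedge hε hq₁.1.2.2.1
    constructor
    · intro hqj
      refine not_uncovered_of_norm_le hε8 ?_ hd hu
      exact hqj ▸ norm_le_of_mem_wedge hε hq.2.2.1
    · intro hqj
      refine not_uncovered_of_norm_le hε8 ?_ hd hu
      exact hqj ▸ norm_le_of_mem_opposite hε hε1 hq.2.2.1 hq.2.2.2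
  have transfer : ∀ ω₁ ω₂ : Fin n → Plane, (∀ k ≠ j, ω₁ k = ω₂ k) → ∀ q : Fin n × Fin n,
      q.1 ≠ j → q.2 ≠ j → GoodPair ε i J₁ J₂ ω₁ q → GoodPair ε i J₁ J₂ ω₂ q := by
    intro ω₁ ω₂ heq q h1 h2 hq
    simpa only [GoodPair, heq _ h1, heq _ h2, heq i hij] using hq
  obtain ⟨ω₀, heq₀, hω₀⟩ := hex
  obtain ⟨q, hq, -⟩ := id hω₀
  refine ⟨{p | p - ω i ∈ uncovered (ω q.1 - ω i) (ω q.2 - ω i)}, ?_, ?_⟩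
  · rw [Finset.card_singleton, pow_one]
    refine unifSq_le hl ?_
    rw [volume_preimage_sub]
    have hne := key ω₀ hω₀ q hq.1
    have hgood := transfer ω₀ ω (fun k hk => heq₀ k (by simpa using hk)) q hne.1 hne.2 hq.1
    exact volume_uncovered_le hε hε1 hgood.2.2.1 hgood.2.2.2
  · rintro ω' heq' hω' k hk
    obtain rfl := Finset.mem_singleton.1 hk
    obtain ⟨q', hq', hu⟩ := id hω'
    have heq : ∀ k' ≠ k, ω' k' = ω₀ k' := fun k' hk' => by
      rw [heq' k' (by simpa using hk'), heq₀ k' (by simpa using hk')]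
    have hne := key ω₀ hω₀ q hq.1
    have hne' := key ω' hω' q' hq'.1
    have hqq : q' = q := by
      refine Encodable.encode_injective (le_antisymm (hq'.2 q ?_) (hq.2 q' ?_))
      · exact transfer ω₀ ω' (fun k' hk' => (heq k' hk').symm) q hne.1 hne.2 hq.1
      · exact transfer ω' ω₀ heq q' hne'.1 hne'.2 hq'.1
    subst hqq
    rwa [heq' q'.1 (by simpa using hne.1), heq' q'.2 (by simpa using hne.2),
      heq' i (by simpa using hij)] at hu

lemma pruned_of_goodPair (hε : 0 < ε) (hε8 : 8 * ε ≤ 1) (hJ₁ : ∀ j ∈ J₁, i < j)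
    (hJ₂ : ∀ j ∈ J₂, i < j) (hdisj : Disjoint J₁ J₂) {ω : Fin n → Plane} {q : Fin n × Fin n}
    (hq : GoodPair ε i J₁ J₂ ω q)
    (hcov : ∀ j ≠ i, ω j - ω i ∉ uncovered (ω q.1 - ω i) (ω q.2 - ω i)) : Pruned ω i := by
  obtain ⟨h1, h2, hw, ho⟩ := hq
  have hd := norm_le_of_mem_wedge hε hw
  have he := norm_le_of_mem_opposite hε (by linarith) hw ho
  have hne : q.1 ≠ q.2 := fun heq => Finset.disjoint_left.1 hdisj h1 (heq ▸ h2)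
  have hd1 : dist (ω q.1) (ω i) ≤ 1 := by rw [dist_eq_norm]; linarith
  have he1 : dist (ω q.2) (ω i) ≤ 1 := by rw [dist_eq_norm]; linarith
  have hde : dist (ω q.1) (ω q.2) ≤ 1 := by
    rw [dist_eq_norm, ← sub_sub_sub_cancel_right _ _ (ω i)]
    linarith [norm_sub_le (ω q.1 - ω i) (ω q.2 - ω i)]
  have hm1 : q.1 ∈ nbhd ω i := Or.inr ⟨(hJ₁ _ h1).ne', by rwa [dist_comm]⟩
  have hm2 : q.2 ∈ nbhd ω i := Or.inr ⟨(hJ₂ _ h2).ne', by rwa [dist_comm]⟩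
  have hsub : ∀ j ∈ nbhd ω i, j ∈ nbhd ω q.1 ∨ j ∈ nbhd ω q.2 := by
    rintro j (rfl | ⟨hji, hj⟩)
    · exact Or.inl (Or.inr ⟨(hJ₁ _ h1).ne, hd1⟩)
    · by_contra! hcon
      simp only [nbhd, Set.mem_ofPred_eq, not_or, not_and, not_le] at hcon
      refine hcov j hji ⟨?_, ?_, ?_⟩
      · rwa [← dist_eq_norm, dist_comm]
      · rw [sub_sub_sub_cancel_right, ← dist_eq_norm, dist_comm]
        exact hcon.1.2 hcon.1.1
      · rw [sub_sub_sub_cancel_right, ← dist_eq_norm, dist_comm]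
        exact hcon.2.2 hcon.2.1
  rcases lt_or_gt_of_ne hne with hlt | hlt
  · refine ⟨q.2, q.1, hJ₁ _ h1, hlt, hm2, hm1, by rwa [dist_comm], fun j hj => ?_⟩
    exact (hsub j hj).symm
  · exact ⟨q.1, q.2, hJ₂ _ h2, hlt, hm1, hm2, hde, hsub⟩

lemma not_pruned_subset (hε : 0 < ε) (hε8 : 8 * ε ≤ 1) (hJ₁ : ∀ j ∈ J₁, i < j)
    (hJ₂ : ∀ j ∈ J₂, i < j) (hdisj : Disjoint J₁ J₂) :
    {ω : Fin n → Plane | ¬ Pruned ω i} ⊆ {ω | ω i ∉ innerSquare l ε} ∪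
      (⋃ b ∈ Finset.range M, missSector l ε h i J₁ (2 * h * b)) ∪
      missOpposite l ε h M i J₁ J₂ ∪ ⋃ j ∈ Finset.univ.erase i, exposed ε i J₁ J₂ j := by
  intro ω hω
  by_contra hcon
  simp only [Set.mem_union, Set.mem_iUnion, not_or, not_exists] at hcon
  obtain ⟨⟨⟨hin, hsec⟩, hopp⟩, hexp⟩ := hcon
  have hin' : ω i ∈ innerSquare l ε := not_not.1 hin
  have hsec' : ∀ b ∈ Finset.range M, ∃ j ∈ J₁, ω j - ω i ∈ sector ε h (2 * h * b) := by
    intro b hb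
    by_contra! hno
    exact hsec b hb ⟨hin', hno⟩
  have hgood : ∃ q, GoodPair ε i J₁ J₂ ω q := by
    by_contra! hno
    exact hopp ⟨hin', hsec', hno⟩
  obtain ⟨q, hq, hmin⟩ := WellFounded.has_min (InvImage.wf Encodable.encode Nat.lt_wfRel.wf)
    {q : Fin n × Fin n | GoodPair ε i J₁ J₂ ω q} hgood
  refine hω (pruned_of_goodPair hε hε8 hJ₁ hJ₂ hdisj hq fun j hj hu => ?_)
  exact hexp j (by simpa using hj) ⟨q, ⟨hq, fun q' hq' => not_lt.1 (hmin q' hq')⟩, hu⟩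

lemma gMeasure_not_pruned_le (hl : 1 ≤ l) (hε : 0 < ε) (hε8 : 8 * ε ≤ 1) (hh : 2 * ε < h)
    (hM : 2 * h * M ≤ 1) (hJ₁ : ∀ j ∈ J₁, i < j) (hJ₂ : ∀ j ∈ J₂, i < j)
    (hdisj : Disjoint J₁ J₂) (hne₁ : J₁.Nonempty) (hne₂ : J₂.Nonempty) :
    gMeasure n l {ω | ¬ Pruned ω i} ≤ ENNReal.ofReal (16 * ε / l +
      M * Real.exp (-(J₁.card * (h * ε ^ 2 / l ^ 2))) +
      Real.exp (-(J₂.card * (M * (2 * ε ^ 3) / l ^ 2))) + n * (3008 * ε ^ 3 / l ^ 2)) := by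
  have hl0 : 0 < l := by linarith
  have hh0 : 0 < h := by linarith
  have hi₁ : i ∉ J₁ := fun hi => lt_irrefl _ (hJ₁ i hi)
  have hi₂ : i ∉ J₂ := fun hi => lt_irrefl _ (hJ₂ i hi)
  refine (measure_mono (not_pruned_subset (l := l) (h := h) (M := M) hε hε8 hJ₁ hJ₂
    hdisj)).trans ?_
  rw [ENNReal.ofReal_add (by positivity) (by positivity),
    ENNReal.ofReal_add (by positivity) (by positivity),
    ENNReal.ofReal_add (by positivity) (by positivity),
    ENNReal.ofReal_mul (p := (M : ℝ)) (by positivity),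
    ENNReal.ofReal_mul (p := (n : ℝ)) (by positivity), ENNReal.ofReal_natCast,
    ENNReal.ofReal_natCast]
  refine (measure_union_le _ _).trans (add_le_add ((measure_union_le _ _).trans
    (add_le_add ((measure_union_le _ _).trans (add_le_add ?_ ?_)) ?_)) ?_)
  · exact gMeasure_nearBoundary_le hl0 hε (by linarith)
  · refine (measure_biUnion_finset_le _ _).trans ?_
    have hle : ∀ b ∈ Finset.range M, gMeasure n l (missSector l ε h i J₁ (2 * h * b)) ≤
        ENNReal.ofReal (Real.exp (-(J₁.card * (h * ε ^ 2 / l ^ 2)))) := by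
      intro b hb
      refine gMeasure_missSector_le hl0 hε hh0.le (by positivity) ?_ hi₁ hne₁
      have : (b : ℝ) + 1 ≤ M := by exact_mod_cast Finset.mem_range.1 hb
      nlinarith
    exact (Finset.sum_le_card_nsmul _ _ _ hle).trans (by simp)
  · exact gMeasure_missOpposite_le hl0 hε (by linarith) hh hM hi₂ hne₂ hdisj
  · refine (measure_biUnion_finset_le _ _).trans ?_
    refine (Finset.sum_le_card_nsmul _ _ _ fun j hj => gMeasure_exposed_le hl0 hε hε8
      (Finset.ne_of_mem_erase hj).symm).trans ?_
    rw [nsmul_eq_mul]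
    gcongr
    exact (Finset.card_le_univ _).trans (by simp)

end Bounds

lemma measurableSet_pruned {n : ℕ} (i : Fin n) :
    MeasurableSet {ω : Fin n → Plane | Pruned ω i} := by
  have hn : ∀ j k : Fin n, MeasurableSet {ω : Fin n → Plane | j ∈ nbhd ω k} := by
    intro j k
    refine (MeasurableSet.const _).union ((MeasurableSet.const _).inter ?_)
    change MeasurableSet {ω : Fin n → Plane | dist (ω k) (ω j) ≤ 1}
    exact measurableSet_le (by fun_prop) (by fun_prop)
  have : {ω : Fin n → Plane | Pruned ω i} = ⋃ i₁, ⋃ i₂, ({_ω | i < i₂} ∩ ({_ω | i₂ < i₁} ∩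
      ({ω | i₁ ∈ nbhd ω i} ∩ ({ω | i₂ ∈ nbhd ω i} ∩ ({ω | dist (ω i₁) (ω i₂) ≤ 1} ∩
      ⋂ j, ({ω | j ∈ nbhd ω i}ᶜ ∪ ({ω | j ∈ nbhd ω i₁} ∪ {ω | j ∈ nbhd ω i₂}))))))) := by
    ext ω
    simp [Pruned, Set.subset_def, imp_iff_not_or]
  rw [this]
  refine MeasurableSet.iUnion fun i₁ => MeasurableSet.iUnion fun i₂ =>
    (MeasurableSet.const _).inter ((MeasurableSet.const _).inter ((hn _ _).inter ((hn _ _).inter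
      (MeasurableSet.inter ?_ (MeasurableSet.iInter fun j =>
        (hn _ _).compl.union ((hn _ _).union (hn _ _)))))))
  exact measurableSet_le (by fun_prop) (by fun_prop)

lemma isProbabilityMeasure_gMeasure (n : ℕ) {l : ℝ} (hl : 0 < l) :
    IsProbabilityMeasure (gMeasure n l) := by
  have := isProbabilityMeasure_unifSq hl
  unfold gMeasure
  infer_instance

lemma integral_U (n : ℕ) {l : ℝ} (hl : 0 < l) :
    ∫ ω, (U n ω : ℝ) ∂(gMeasure n l) =
      ∑ i : Fin n, (1 - (gMeasure n l).real {ω | ¬ Pruned ω i}) := by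
  classical
  have := isProbabilityMeasure_gMeasure n hl
  have hU : ∀ ω : Fin n → Plane, (U n ω : ℝ) =
      ∑ i : Fin n, {ω : Fin n → Plane | Pruned ω i}.indicator (fun _ => (1 : ℝ)) ω := by
    intro ω
    rw [U, Set.ncard_eq_toFinset_card']
    simp [Set.indicator_apply]
  simp_rw [hU]
  rw [integral_finsetSum]
  · refine Finset.sum_congr rfl fun i _ => ?_
    rw [integral_indicator_const _ (measurableSet_pruned i), smul_eq_mul, mul_one,
      show {ω : Fin n → Plane | ¬ Pruned ω i} = {ω | Pruned ω i}ᶜ from rfl,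
      probReal_compl_eq_one_sub (measurableSet_pruned i)]
    ring
  · intro i _
    exact (integrable_const (1 : ℝ)).indicator (measurableSet_pruned i)

/-- A vertex followed by at least `a = T ^ 16 l²` others is pruned, except with probability of
order `1 / T`. -/
lemma gMeasure_not_pruned_le_div {n : ℕ} {l a T : ℝ} (hl : 1 ≤ l) (hT : 2 ≤ T)
    (haT : a = T ^ 16 * l ^ 2) (ha : 3 ≤ a) (hnT : n ≤ a * T)
    (hexp₁ : T ^ 3 * Real.exp (-(T / 3)) ≤ 1 / T) (hexp₂ : Real.exp (-(T / 6)) ≤ 1 / T)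
    (i : Fin n) (hi : a ≤ (n - 1 - i : ℕ)) :
    (gMeasure n l).real {ω | ¬ Pruned ω i} ≤ 3026 / T := by
  have hT0 : 0 < T := by linarith
  have hl0 : 0 < l := by linarith
  have hT3 : 8 ≤ T ^ 3 := by
    calc (8 : ℝ) = 2 ^ 3 := by norm_num
      _ ≤ T ^ 3 := by gcongr
  have hT6 : 64 ≤ T ^ 6 := by
    calc (64 : ℝ) = 2 ^ 6 := by norm_num
      _ ≤ T ^ 6 := by gcongr
  set N := n - 1 - (i : ℕ) with hN
  obtain ⟨J₁, hJ₁, hc₁⟩ := Finset.exists_subset_card_eq (s := Finset.Ioi i) (n := N / 2)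
    (by rw [Fin.card_Ioi]; omega)
  set J₂ := Finset.Ioi i \ J₁ with hJ₂
  have hc₂ : J₂.card = N - N / 2 := by
    rw [hJ₂, Finset.card_sdiff_of_subset hJ₁, Fin.card_Ioi, hc₁]
  have hN1 : a / 3 ≤ J₁.card := by
    have : N ≤ 2 * J₁.card + 1 := by omega
    have : (N : ℝ) ≤ 2 * J₁.card + 1 := by exact_mod_cast this
    linarith
  have hN2 : a / 3 ≤ J₂.card := by
    have : (J₁.card : ℝ) ≤ J₂.card := by exact_mod_cast (by omega)
    linarith
  have hne₁ : J₁.Nonempty := by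
    rw [← Finset.card_pos]
    exact_mod_cast (show (0 : ℝ) < J₁.card by linarith)
  have hne₂ : J₂.Nonempty := by
    rw [← Finset.card_pos]
    exact_mod_cast (show (0 : ℝ) < J₂.card by linarith)
  set M := ⌊T ^ 3 / 2⌋₊ with hM
  have hM1 : (M : ℝ) ≤ T ^ 3 / 2 := Nat.floor_le (by positivity)
  have hM2 : T ^ 3 / 4 ≤ M := by
    have := Nat.lt_floor_add_one (T ^ 3 / 2)
    rw [← hM] at this
    linarith
  have hbound := gMeasure_not_pruned_le (n := n) (l := l) (ε := 1 / T ^ 6) (h := 1 / T ^ 3)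
    (M := M) (i := i) (J₁ := J₁) (J₂ := J₂) hl (by positivity)
    (by rw [mul_one_div, div_le_one (by positivity)]; linarith)
    (by
      rw [mul_one_div, div_lt_div_iff₀ (by positivity) (by positivity)]
      nlinarith)
    (by
      rw [mul_one_div, div_mul_eq_mul_div, div_le_one (by positivity)]; linarith)
    (fun j hj => Finset.mem_Ioi.1 (hJ₁ hj))
    (fun j hj => Finset.mem_Ioi.1 (Finset.mem_sdiff.1 hj).1) Finset.disjoint_sdiff hne₁ hne₂
  have e1 : 16 * (1 / T ^ 6) / l ≤ 16 / T := by
    rw [mul_one_div, div_div]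
    gcongr
    calc T = T * 1 * 1 := by ring
      _ ≤ T * T ^ 5 * l := by gcongr; exact one_le_pow₀ (by linarith)
      _ = T ^ 6 * l := by ring
  have e2 : M * Real.exp (-(J₁.card * (1 / T ^ 3 * (1 / T ^ 6) ^ 2 / l ^ 2))) ≤ 1 / T := by
    refine le_trans ?_ hexp₁
    gcongr
    · linarith
    · calc T / 3 = a / 3 * (1 / T ^ 3 * (1 / T ^ 6) ^ 2 / l ^ 2) := by rw [haT]; field_simp
        _ ≤ _ := by gcongr
  have e3 : Real.exp (-(J₂.card * (M * (2 * (1 / T ^ 6) ^ 3) / l ^ 2))) ≤ 1 / T := by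
    refine le_trans ?_ hexp₂
    gcongr
    calc T / 6 = a / 3 * (T ^ 3 / 4 * (2 * (1 / T ^ 6) ^ 3) / l ^ 2) := by
          rw [haT]; field_simp; ring
      _ ≤ _ := by gcongr
  have e4 : n * (3008 * (1 / T ^ 6) ^ 3 / l ^ 2) ≤ 3008 / T := by
    calc n * (3008 * (1 / T ^ 6) ^ 3 / l ^ 2)
        ≤ a * T * (3008 * (1 / T ^ 6) ^ 3 / l ^ 2) := by gcongr
      _ = 3008 / T := by rw [haT]; field_simp
  refine (ENNReal.toReal_mono ENNReal.ofReal_ne_top hbound).trans ?_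
  rw [ENNReal.toReal_ofReal (by positivity)]
  have : 3026 / T = 16 / T + 1 / T + 1 / T + 3008 / T := by ring
  linarith

lemma card_late_le (n : ℕ) {a : ℝ} (ha : 0 ≤ a) :
    ((Finset.univ.filter fun i : Fin n => ((n - 1 - i : ℕ) : ℝ) < a).card : ℝ) ≤ a + 1 := by
  have hcard : (Finset.univ.filter fun i : Fin n => ((n - 1 - i : ℕ) : ℝ) < a).card ≤
      (Finset.range ⌈a⌉₊).card := by
    refine Finset.card_le_card_of_injOn (fun i => n - 1 - (i : ℕ)) ?_ ?_
    · intro i hi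
      simpa [Nat.lt_ceil] using hi
    · intro i _ j _ hij
      have := i.2
      have := j.2
      simp only at hij
      exact Fin.ext (by omega)
  rw [Finset.card_range] at hcard
  exact (Nat.cast_le.2 hcard).trans (Nat.ceil_lt_add_one ha).le

lemma sub_le_integral_U {n : ℕ} {l a T : ℝ} (hl : 1 ≤ l) (hT : 2 ≤ T)
    (haT : a = T ^ 16 * l ^ 2) (ha : 3 ≤ a) (hnT : n ≤ a * T)
    (hexp₁ : T ^ 3 * Real.exp (-(T / 3)) ≤ 1 / T) (hexp₂ : Real.exp (-(T / 6)) ≤ 1 / T) :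
    (n : ℝ) - 3028 * a ≤ ∫ ω, (U n ω : ℝ) ∂(gMeasure n l) := by
  have := isProbabilityMeasure_gMeasure n (show 0 < l by linarith)
  have hT0 : 0 < T := by linarith
  have hdiv : n / T ≤ a := (div_le_iff₀ hT0).2 hnT
  rw [integral_U n (by linarith), Finset.sum_sub_distrib]
  have hsum : ∑ i : Fin n, (gMeasure n l).real {ω | ¬ Pruned ω i} ≤
      ∑ i : Fin n, (3026 / T + if ((n - 1 - i : ℕ) : ℝ) < a then 1 else 0) := by
    refine Finset.sum_le_sum fun i _ => ?_
    split_ifs with hi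
    · exact measureReal_le_one.trans (le_add_of_nonneg_left (by positivity))
    · rw [add_zero]
      exact gMeasure_not_pruned_le_div hl hT haT ha hnT hexp₁ hexp₂ i (not_lt.1 hi)
  rw [Finset.sum_add_distrib, Finset.sum_const, Finset.sum_boole, Finset.card_univ,
    Fintype.card_fin, nsmul_eq_mul] at hsum
  have hlate := card_late_le n (show 0 ≤ a by linarith)
  have : (n : ℝ) * (3026 / T) = 3026 * (n / T) := by ring
  simp only [Finset.sum_const, Finset.card_univ, Fintype.card_fin, nsmul_eq_mul, mul_one]
  linarith

lemma eventually_pow_mul_exp_neg_le {k : ℕ} {c : ℝ} (hc : 0 < c) :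
    ∀ᶠ T : ℝ in Filter.atTop, T ^ k * Real.exp (-(T / c)) ≤ 1 / T := by
  have h1 := (Real.tendsto_pow_mul_exp_neg_atTop_nhds_zero (k + 1)).comp
    (Filter.tendsto_id.atTop_div_const hc)
  have h2 := h1.eventually_le_const (show (0 : ℝ) < 1 / c ^ (k + 1) by positivity)
  filter_upwards [h2, Filter.eventually_gt_atTop 0] with T hT hT0
  simp only [Function.comp, id, div_pow] at hT
  rw [le_div_iff₀ hT0]
  rw [le_div_iff₀ (by positivity)] at hT
  calc T ^ k * Real.exp (-(T / c)) * T
      = T ^ (k + 1) / c ^ (k + 1) * Real.exp (-(T / c)) * c ^ (k + 1) := by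
        field_simp; ring
    _ ≤ 1 := hT

/-- Under the stated conditions on `⟨ℓ_n⟩` and `⟨α_n⟩`, there is `C > 0` such
that for all sufficiently large `n`, `E(U) ≥ n − C α_n`. -/
theorem expected_pruned_lower_bound (cbar : ℝ) (hcbar : 0 < cbar) (ℓ : ℕ → ℝ) (hmono : Monotone ℓ)
    (hℓ : ∀ n : ℕ, 1 < n → Real.log n ≤ ℓ n ∧ ℓ n ≤ cbar * Real.sqrt (n / Real.log n))
    (α : ℕ → ℝ) (hα : ∀ n, 0 < α n)
    (hlittleo : (fun n => α n) =o[Filter.atTop] fun n => (n : ℝ))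
    (hξ : Filter.Tendsto (fun n => α n / ℓ n ^ 2) Filter.atTop Filter.atTop)
    (h16 : ∀ᶠ n : ℕ in Filter.atTop,
      16 * (n : ℝ) / (Real.log (α n / ℓ n ^ 2)) ^ (3/2 : ℝ) < α n) :
    ∃ C > (0 : ℝ), ∀ᶠ n : ℕ in Filter.atTop,
      (n : ℝ) - C * α n ≤ ∫ ω, (U n ω : ℝ) ∂(gMeasure n (ℓ n)) := by
  refine ⟨3028, by norm_num, ?_⟩
  have hroot : Filter.Tendsto (fun x : ℝ => x ^ (1 / 16 : ℝ)) Filter.atTop Filter.atTop :=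
    tendsto_rpow_atTop (by norm_num)
  have hlog : ∀ᶠ x : ℝ in Filter.atTop, Real.log x ^ (3 / 2 : ℝ) ≤ x ^ (1 / 16 : ℝ) := by
    have h := (isLittleO_log_rpow_rpow_atTop (s := 1 / 16) (3 / 2) (by norm_num)).def
      (show (0 : ℝ) < 1 by norm_num)
    filter_upwards [h, Filter.eventually_ge_atTop 1] with x hx hx1
    rw [one_mul, Real.norm_of_nonneg (by have := Real.log_nonneg hx1; positivity),
      Real.norm_of_nonneg (by positivity)] at hx
    exact hx
  filter_upwards [h16, hξ.eventually hlog, hξ.eventually_ge_atTop 3,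
    (hroot.comp hξ).eventually_ge_atTop 2,
    (hroot.comp hξ).eventually (eventually_pow_mul_exp_neg_le (k := 3) (show (0 : ℝ) < 3 by simp)),
    (hroot.comp hξ).eventually (eventually_pow_mul_exp_neg_le (k := 0) (show (0 : ℝ) < 6 by simp)),
    Filter.eventually_ge_atTop 3] with n hn hlogn hξ3 hT hexp₁ hexp₂ hn3
  simp only [Function.comp] at hT hexp₁ hexp₂
  have hl : 1 ≤ ℓ n := by
    refine le_trans ?_ (hℓ n (by omega)).1
    rw [Real.le_log_iff_exp_le (by positivity)]
    have : (3 : ℝ) ≤ n := by exact_mod_cast hn3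
    linarith [Real.exp_one_lt_d9]
  set x := α n / ℓ n ^ 2 with hx
  set T := x ^ (1 / 16 : ℝ) with hTdef
  have hT16 : T ^ 16 = x := by
    rw [hTdef, ← Real.rpow_natCast, ← Real.rpow_mul (by linarith)]; norm_num
  have haT : α n = T ^ 16 * ℓ n ^ 2 := by rw [hT16, hx]; field_simp
  have ha3 : 3 ≤ α n := by
    rw [haT, hT16]
    nlinarith [one_le_pow₀ hl (n := 2)]
  have hlogpos : 0 < Real.log x ^ (3 / 2 : ℝ) := Real.rpow_pos_of_pos (Real.log_pos (by linarith)) _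
  have hnT : (n : ℝ) ≤ α n * T := by
    rw [div_lt_iff₀ hlogpos] at hn
    have := mul_le_mul_of_nonneg_left hlogn (hα n).le
    have : (0 : ℝ) ≤ n := n.cast_nonneg
    linarith
  exact sub_le_integral_U hl hT haT ha3 hnT hexp₁ (by simpa using hexp₂)
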